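/- Let S be a factorizable inverse monoid with zero, with semilattice of idempotents E and group of units G, such that the natural connection θ is a dual isomorphism from E onto a sublattice of L(G). Then any two subcentral (resp. central) idempotent series of S possess isomorphic subcentral (resp. central) refinements. -/

import Mathlib

/-- An inverse monoid: a monoid in which every element `a` has an inverse `a⁻¹`
satisfying `a * a⁻¹ * a = a` and `a⁻¹ * a * a⁻¹ = a⁻¹`, and this inverse is unique. -/
class InverseMonoid (S : Type*) extends Monoid S, Inv S where
  mul_inv_mul : ∀ a : S, a * a⁻¹ * a = a
  inv_mul_inv : ∀ a : S, a⁻¹ * a * a⁻¹ = a⁻¹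
  inv_unique : ∀ a b : S, a * b * a = a → b * a * b = b → b = a⁻¹

/-- An inverse monoid with a (two-sided absorbing) zero element. -/
class InverseMonoidWithZero (S : Type*) extends InverseMonoid S, Zero S where
  zero_mul : ∀ a : S, 0 * a = 0
  mul_zero : ∀ a : S, a * 0 = 0

/-- The natural partial order on an inverse monoid: `a ≤ b` iff `a = e * b`
for some idempotent `e`. -/
def NatLe {S : Type*} [Monoid S] (a b : S) : Prop :=
  ∃ e : S, IsIdempotentElem e ∧ a = e * b

/-- The filter `e↑ = {s | e ≤ s}` generated by `e`. -/
def upfilter {S : Type*} [Monoid S] (e : S) : Set S := {s | NatLe e s}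

/-- `c` is central in (a subset) `T`: it belongs to `T` and commutes with all elements of `T`. -/
def CentralIn {S : Type*} [Mul S] (T : Set S) (c : S) : Prop :=
  c ∈ T ∧ ∀ s ∈ T, c * s = s * c

/-- A monoid is factorizable if every element is a product of an idempotent and a unit. -/
def Factorizable (S : Type*) [Monoid S] : Prop :=
  ∀ s : S, ∃ e g : S, IsIdempotentElem e ∧ IsUnit g ∧ s = e * g

/-- The natural connection `θ`: for an (idempotent) `e`, the subgroup
`eθ = {g ∈ G : e * g = e}` of the group of units. -/
def natconn {S : Type*} [Monoid S] (e : S) : Subgroup Sˣ where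
  carrier := {g : Sˣ | e * (g : S) = e}
  one_mem' := by simp
  mul_mem' := by
    intro a b ha hb
    simp only [Set.mem_setOf_eq, Units.val_mul] at *
    rw [← mul_assoc, ha, hb]
  inv_mem' := by
    intro a ha
    simp only [Set.mem_setOf_eq] at *
    nth_rewrite 1 [← ha]
    rw [mul_assoc, ← Units.val_mul, mul_inv_cancel, Units.val_one, mul_one]

/-- The natural connection is a dual isomorphism from the idempotents onto a
sublattice of the lattice of subgroups of the group of units: it is injective on
idempotents, order-reversing in both directions, and its image is closed under
joins and meets of subgroups. -/
def NatconnDualIso (S : Type*) [Monoid S] : Prop :=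
  (∀ e f : S, IsIdempotentElem e → IsIdempotentElem f → natconn e = natconn f → e = f) ∧
  (∀ e f : S, IsIdempotentElem e → IsIdempotentElem f →
    (NatLe e f ↔ natconn f ≤ natconn e)) ∧
  (∀ e f : S, IsIdempotentElem e → IsIdempotentElem f →
    (∃ h : S, IsIdempotentElem h ∧ natconn h = natconn e ⊔ natconn f) ∧
    (∃ h : S, IsIdempotentElem h ∧ natconn h = natconn e ⊓ natconn f))

/-- `j` is the join (least upper bound) of `e` and `f` with respect to the natural order. -/
def IsNatJoin {S : Type*} [Monoid S] (e f j : S) : Prop :=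
  NatLe e j ∧ NatLe f j ∧ ∀ x : S, NatLe e x → NatLe f x → NatLe j x

/-- `F_{e,f} = f · e↑`. -/
def Fef {S : Type*} [Monoid S] (e f : S) : Set S := (f * ·) '' upfilter e

/-- `UF_{e,f}`: the group of units of the monoid `F_{e,f}` (whose identity is `f`). -/
def UFef {S : Type*} [Monoid S] (e f : S) : Set S :=
  {x ∈ Fef e f | ∃ y ∈ Fef e f, x * y = f ∧ y * x = f}

/-- The centre of a subset `T`. -/
def ZIn {S : Type*} [Mul S] (T : Set S) : Set S := {x ∈ T | ∀ y ∈ T, x * y = y * x}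

/-- Two subsets are isomorphic as semigroups (with the induced multiplication). -/
def SubIso {S : Type*} [Mul S] (A B : Set S) : Prop :=
  ∃ φ : S → S, Set.BijOn φ A B ∧ ∀ a ∈ A, ∀ b ∈ A, φ (a * b) = φ a * φ b

/-- A subcentral idempotent series between `0` and `a`. -/
def IsSubcentralSeriesBetween {S : Type*} [Monoid S] [Zero S] (n : ℕ) (c : ℕ → S) (a : S) :
    Prop :=
  c 0 = 0 ∧ c n = a ∧ (∀ i ≤ n, IsIdempotentElem (c i)) ∧
    ∀ i < n, CentralIn (upfilter (c i)) (c (i + 1))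

/-- A subcentral idempotent series of `S` (between `0` and `1`). -/
def IsSubcentralSeries {S : Type*} [Monoid S] [Zero S] (n : ℕ) (c : ℕ → S) : Prop :=
  IsSubcentralSeriesBetween n c 1

/-- A central idempotent series of `S`. -/
def IsCentralSeries {S : Type*} [Monoid S] [Zero S] (n : ℕ) (c : ℕ → S) : Prop :=
  c 0 = 0 ∧ c n = 1 ∧ (∀ i ≤ n, IsIdempotentElem (c i)) ∧
    (∀ i < n, NatLe (c i) (c (i + 1))) ∧
    ∀ i < n, CentralIn Set.univ (c (i + 1))

/-- A subcentral idempotent: one occurring in some subcentral idempotent series of `S`. -/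
def IsSubcentralIdem {S : Type*} [Monoid S] [Zero S] (e : S) : Prop :=
  ∃ (n : ℕ) (c : ℕ → S), IsSubcentralSeries n c ∧ ∃ i ≤ n, c i = e

/-- A `G`-nilpotent series: a chain of central idempotents from `0` to `1` with
`F_{eᵢ,eᵢ₊₁} ⊆ Z(F_{0,eᵢ₊₁})`. -/
def GNilpotentSeries {S : Type*} [Monoid S] [Zero S] (n : ℕ) (c : ℕ → S) : Prop :=
  c 0 = 0 ∧ c n = 1 ∧ (∀ i ≤ n, IsIdempotentElem (c i) ∧ CentralIn Set.univ (c i)) ∧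
    (∀ i < n, NatLe (c i) (c (i + 1))) ∧
    ∀ i < n, Fef (c i) (c (i + 1)) ⊆ ZIn (Fef 0 (c (i + 1)))

/-- A `G`-solvable series: a chain of central idempotents from `0` to `1` with
each `F_{eᵢ,eᵢ₊₁}` commutative. -/
def GSolvableSeries {S : Type*} [Monoid S] [Zero S] (n : ℕ) (c : ℕ → S) : Prop :=
  c 0 = 0 ∧ c n = 1 ∧ (∀ i ≤ n, IsIdempotentElem (c i) ∧ CentralIn Set.univ (c i)) ∧
    (∀ i < n, NatLe (c i) (c (i + 1))) ∧
    ∀ i < n, ∀ x ∈ Fef (c i) (c (i + 1)), ∀ y ∈ Fef (c i) (c (i + 1)), x * y = y * x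

/-- `S` is `G`-nilpotent. -/
def GNilpotent (S : Type*) [Monoid S] [Zero S] : Prop :=
  ∃ (n : ℕ) (c : ℕ → S), GNilpotentSeries n c

/-- `S` is `G`-solvable. -/
def GSolvable (S : Type*) [Monoid S] [Zero S] : Prop :=
  ∃ (n : ℕ) (c : ℕ → S), GSolvableSeries n c

/-- Two idempotent series are isomorphic: same length, and a one-to-one correspondence
between their factors under which corresponding factors are isomorphic. -/
def SeriesIso {S : Type*} [Monoid S] (n : ℕ) (c : ℕ → S) (n' : ℕ) (d : ℕ → S) : Prop :=
  n = n' ∧ ∃ σ : ℕ → ℕ, Set.BijOn σ {i | i < n} {i | i < n'} ∧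
    ∀ i < n, SubIso (Fef (c i) (c (i + 1))) (Fef (d (σ i)) (d (σ i + 1)))

/-- A composition series (for a kind `P` of series): it has no repeated terms, and any
refinement of it (of the same kind) only repeats its terms. -/
def IsCompositionOf {S : Type*} (P : ℕ → (ℕ → S) → Prop) (n : ℕ) (c : ℕ → S) : Prop :=
  P n c ∧ (∀ i ≤ n, ∀ j ≤ n, c i = c j → i = j) ∧
    ∀ (m : ℕ) (d : ℕ → S), P m d → (∀ i ≤ n, ∃ j ≤ m, d j = c i) →
      ∀ j ≤ m, ∃ i ≤ n, d j = c i

/-!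
Under a dual isomorphism `θ`, a unit `g` commutes with an idempotent `e` iff it normalises `eθ`, so
`f` is central in `e↑` iff `fθ` is a normal subgroup of `eθ`. The elements of `F_{e,f}` are the
products `p * g` with `e ≤ p ≤ f` and `g ∈ eθ`, and `p * g` determines `p` and the coset of `g`
modulo `pθ`. This lets the second isomorphism theorem, Zassenhaus' lemma and Schreier's refinement
of normal series carry over from the subgroups `eθ` to the factors `F_{e,f}`.
-/

section NormalSubgroups

variable {G : Type*} [Group G] {H K N : Subgroup G}

theorem sup_inf_assoc_of_left_le_normalizer (hK : H ≤ K) (hN : H ≤ Subgroup.normalizer N) :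
    (H ⊔ N) ⊓ K = H ⊔ (N ⊓ K) := by
  have hNK : H ≤ Subgroup.normalizer ((N ⊓ K : Subgroup G) : Set G) :=
    (le_inf hN (hK.trans Subgroup.le_normalizer)).trans Subgroup.inf_normalizer_le_normalizer_inf
  apply SetLike.coe_injective
  rw [Subgroup.coe_mul_of_left_le_normalizer_right _ _ hNK, Subgroup.mul_inf_assoc _ _ _ hK,
    Subgroup.coe_inf, Subgroup.coe_mul_of_left_le_normalizer_right _ _ hN]

theorem sup_inf_assoc_of_right_le_normalizer (hK : N ≤ K) (hN : H ≤ Subgroup.normalizer N) :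
    (N ⊔ H) ⊓ K = N ⊔ (H ⊓ K) := by
  apply SetLike.coe_injective
  rw [Subgroup.coe_mul_of_right_le_normalizer_left _ _ (inf_le_left.trans hN),
    Subgroup.mul_inf_assoc _ _ _ hK, Subgroup.coe_inf,
    Subgroup.coe_mul_of_right_le_normalizer_left _ _ hN]

/-- `N` is a normal subgroup of `H`, both being subgroups of an ambient group. -/
structure NormalIn (N H : Subgroup G) : Prop where
  le : N ≤ H
  le_normalizer : H ≤ Subgroup.normalizer N

namespace NormalIn

variable {N' H' : Subgroup G}

theorem refl (H : Subgroup G) : NormalIn H H :=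
  ⟨le_rfl, Subgroup.le_normalizer⟩

theorem inf (h : NormalIn N H) (h' : NormalIn N' H') : NormalIn (N ⊓ N') (H ⊓ H') :=
  ⟨inf_le_inf h.le h'.le, (inf_le_inf h.le_normalizer h'.le_normalizer).trans
    Subgroup.inf_normalizer_le_normalizer_inf⟩

theorem sup (h : NormalIn N H) (h' : NormalIn N' H) : NormalIn (N ⊔ N') H :=
  ⟨sup_le h.le h'.le, (le_inf h.le_normalizer h'.le_normalizer).trans
    (Subgroup.normalizer_inf_normalizer_le_normalizer_sup _ _)⟩

theorem sup_inf_right (h : NormalIn N H) (h' : NormalIn N' H') :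
    NormalIn (N ⊔ (H ⊓ N')) (N ⊔ (H ⊓ H')) where
  le := sup_le_sup_left (inf_le_inf_left _ h'.le) _
  le_normalizer := sup_le (le_sup_left.trans Subgroup.le_normalizer) <|
    (le_inf (inf_le_left.trans h.le_normalizer) ((refl H).inf h').le_normalizer).trans
      (Subgroup.normalizer_inf_normalizer_le_normalizer_sup _ _)

theorem sup_inf_inf_inf (h : NormalIn N H) (h' : NormalIn N' H') :
    (N ⊔ (H ⊓ N')) ⊓ (H ⊓ H') = (N ⊓ H') ⊔ (H ⊓ N') := by
  rw [sup_comm N, sup_inf_assoc_of_left_le_normalizer (inf_le_inf_left _ h'.le)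
    (inf_le_left.trans h.le_normalizer), ← inf_assoc, inf_eq_left.2 h.le, sup_comm]

end NormalIn

end NormalSubgroups

namespace InverseMonoid

variable {S : Type*} [InverseMonoid S] {e f p q : S}

theorem inv_eq_self (he : IsIdempotentElem e) : e⁻¹ = e :=
  (inv_unique e e (by rw [he.eq, he.eq]) (by rw [he.eq, he.eq])).symm

theorem inv_inv (a : S) : a⁻¹⁻¹ = a :=
  (inv_unique _ _ (inv_mul_inv a) (mul_inv_mul a)).symm

theorem isIdempotentElem_mul (he : IsIdempotentElem e) (hf : IsIdempotentElem f) :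
    IsIdempotentElem (e * f) := by
  set x := (e * f)⁻¹ with hx
  have hxx : x * (e * f) * x = x := inv_mul_inv (e * f)
  -- `f * x * e` is another inverse of `e * f`, hence equals `x`.
  have hfxe : f * x * e = x := by
    apply inv_unique
    · calc e * f * (f * x * e) * (e * f) = e * (f * f) * x * (e * e) * f := by
            simp only [mul_assoc]
        _ = e * f * x * (e * f) := by rw [he.eq, hf.eq]; simp only [mul_assoc]
        _ = e * f := mul_inv_mul (e * f)
    · calc f * x * e * (e * f) * (f * x * e) = f * x * (e * e) * (f * f) * x * e := by
            simp only [mul_assoc]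
        _ = f * (x * (e * f) * x) * e := by rw [he.eq, hf.eq]; simp only [mul_assoc]
        _ = f * x * e := by rw [hxx]
  have hx_idem : IsIdempotentElem x := by
    calc x * x = (f * x * e) * (f * x * e) := by rw [hfxe]
      _ = f * (x * (e * f) * x) * e := by simp only [mul_assoc]
      _ = x := by rw [hxx, hfxe]
  rwa [← inv_inv (e * f), ← hx, inv_eq_self hx_idem]

theorem commute_of_isIdempotentElem (he : IsIdempotentElem e) (hf : IsIdempotentElem f) :
    Commute e f := by
  have hef := isIdempotentElem_mul he hf
  have hfe := isIdempotentElem_mul hf he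
  have hinv : f * e = (e * f)⁻¹ := by
    apply inv_unique
    · calc e * f * (f * e) * (e * f) = e * (f * f) * (e * e) * f := by simp only [mul_assoc]
        _ = e * f * (e * f) := by rw [he.eq, hf.eq]; simp only [mul_assoc]
        _ = e * f := hef
    · calc f * e * (e * f) * (f * e) = f * (e * e) * (f * f) * e := by simp only [mul_assoc]
        _ = f * e * (f * e) := by rw [he.eq, hf.eq]; simp only [mul_assoc]
        _ = f * e := hfe
  exact ((inv_eq_self hef).symm.trans hinv.symm : e * f = f * e)

theorem natLe_iff_mul_eq {s : S} (he : IsIdempotentElem e) : NatLe e s ↔ e * s = e := by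
  refine ⟨?_, fun h => ⟨e, he, h.symm⟩⟩
  rintro ⟨k, hk, hks⟩
  have hek : e * k = e := by
    rw [(commute_of_isIdempotentElem he hk).eq, hks, ← mul_assoc, hk.eq]
  calc e * s = e * k * s := by rw [hek]
    _ = e * e := by rw [mul_assoc, ← hks]
    _ = e := he

theorem eq_of_mul_unit_eq (hp : IsIdempotentElem p) (hq : IsIdempotentElem q) {g k : Sˣ}
    (h : p * (g : S) = q * k) : p = q := by
  have hqp : q * p = p := by
    rw [← Units.mul_left_inj g, mul_assoc, h, ← mul_assoc, hq.eq]
  have hpq : p * q = q := by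
    rw [← Units.mul_left_inj k, mul_assoc, ← h, ← mul_assoc, hp.eq]
  rw [← hqp, (commute_of_isIdempotentElem hq hp).eq, hpq]

end InverseMonoid

section Monoid

variable {S : Type*} [Monoid S]

theorem mem_natconn {e : S} {g : Sˣ} : g ∈ natconn e ↔ e * (g : S) = e := Iff.rfl

theorem natconn_one : natconn (1 : S) = ⊥ := by
  ext g
  simp [mem_natconn, Subgroup.mem_bot]

theorem mul_unit_eq_mul_unit_iff {e : S} {g k : Sˣ} :
    e * (g : S) = e * k ↔ g * k⁻¹ ∈ natconn e := by
  rw [mem_natconn, Units.val_mul, ← mul_assoc, Units.mul_inv_eq_iff_eq_mul]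

theorem isIdempotentElem_conj {e : S} (he : IsIdempotentElem e) (g : Sˣ) :
    IsIdempotentElem ((g : S) * e * (g⁻¹ : Sˣ)) := by
  calc (g : S) * e * (g⁻¹ : Sˣ) * (g * e * (g⁻¹ : Sˣ)) = g * (e * e) * (g⁻¹ : Sˣ) := by
        simp only [mul_assoc, Units.inv_mul_cancel_left]
    _ = g * e * (g⁻¹ : Sˣ) := by rw [he.eq]

theorem natconn_conj (e : S) (g : Sˣ) :
    natconn ((g : S) * e * (g⁻¹ : Sˣ)) = (natconn e).map (MulAut.conj g) := by
  ext u
  refine Iff.trans ?_ Subgroup.mem_map_equiv.symm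
  rw [MulAut.conj_symm_apply, mem_natconn, mem_natconn]
  simp only [Units.val_mul, mul_assoc, Units.mul_right_inj]
  simp only [← mul_assoc, ← Units.eq_mul_inv_iff_mul_eq]

theorem mul_mul_eq_of_commute {f s : S} (hf : IsIdempotentElem f) (h : Commute f s) (t : S) :
    f * (s * t) = f * s * (f * t) := by
  calc f * (s * t) = f * f * s * t := by rw [hf.eq, mul_assoc]
    _ = f * (f * s) * t := by rw [mul_assoc f f]
    _ = f * (s * f) * t := by rw [h.eq]
    _ = f * s * (f * t) := by simp only [mul_assoc]

theorem SubIso.symm {A B : Set S} (h : SubIso A B) (hA : ∀ a ∈ A, ∀ b ∈ A, a * b ∈ A) :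
    SubIso B A := by
  obtain ⟨φ, hφ, hmul⟩ := h
  have hinv := hφ.invOn_invFunOn
  have hψ : Set.BijOn (Function.invFunOn φ A) B A := (Set.bijOn_comm hinv).2 hφ
  refine ⟨_, hψ, fun a ha b hb => ?_⟩
  have := hmul _ (hψ.mapsTo ha) _ (hψ.mapsTo hb)
  rw [hinv.2 ha, hinv.2 hb] at this
  rw [← this, hinv.1 (hA _ (hψ.mapsTo ha) _ (hψ.mapsTo hb))]

theorem SubIso.trans {A B C : Set S} (h : SubIso A B) (h' : SubIso B C) : SubIso A C := by
  obtain ⟨φ, hφ, hφmul⟩ := h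
  obtain ⟨ψ, hψ, hψmul⟩ := h'
  refine ⟨ψ ∘ φ, hψ.comp hφ, fun a ha b hb => ?_⟩
  rw [Function.comp_apply, hφmul a ha b hb, hψmul _ (hφ.mapsTo ha) _ (hφ.mapsTo hb)]
  rfl

end Monoid

section Filters

variable {S : Type*} [InverseMonoid S] {e f s : S}

open InverseMonoid

theorem mem_upfilter_iff (he : IsIdempotentElem e) : s ∈ upfilter e ↔ e * s = e :=
  natLe_iff_mul_eq he

theorem mul_mem_upfilter {t : S} (he : IsIdempotentElem e) (hs : s ∈ upfilter e)
    (ht : t ∈ upfilter e) : s * t ∈ upfilter e := by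
  rw [mem_upfilter_iff he] at *
  rw [← mul_assoc, hs, ht]

theorem Factorizable.mem_upfilter_iff (hfact : Factorizable S) (he : IsIdempotentElem e) :
    s ∈ upfilter e ↔
      ∃ (p : S) (g : Sˣ), IsIdempotentElem p ∧ NatLe e p ∧ g ∈ natconn e ∧ s = p * g := by
  rw [_root_.mem_upfilter_iff he]
  constructor
  · intro hs
    obtain ⟨p, _, hp, ⟨g, rfl⟩, rfl⟩ := hfact s
    have hep : e * p = e := eq_of_mul_unit_eq (isIdempotentElem_mul he hp) he (g := g) (k := 1)
      (by rw [mul_assoc, hs, Units.val_one, mul_one])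
    refine ⟨p, g, hp, (natLe_iff_mul_eq he).2 hep, ?_, rfl⟩
    rwa [← mul_assoc, hep] at hs
  · rintro ⟨p, g, -, hep, hg, rfl⟩
    rw [← mul_assoc, (natLe_iff_mul_eq he).1 hep, hg]

theorem Fef_subset_upfilter (he : IsIdempotentElem e) (hef : NatLe e f) :
    Fef e f ⊆ upfilter e := by
  rintro _ ⟨s, hs, rfl⟩
  exact mul_mem_upfilter he hef hs

theorem Fef_mul_mem (he : IsIdempotentElem e) (hf : IsIdempotentElem f)
    (hc : CentralIn (upfilter e) f) : ∀ a ∈ Fef e f, ∀ b ∈ Fef e f, a * b ∈ Fef e f := by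
  rintro _ ⟨s, hs, rfl⟩ _ ⟨t, ht, rfl⟩
  exact ⟨s * t, mul_mem_upfilter he hs ht, mul_mul_eq_of_commute hf (hc.2 s hs) t⟩

theorem Factorizable.mem_Fef_iff (hfact : Factorizable S) (he : IsIdempotentElem e)
    (hf : IsIdempotentElem f) (hef : NatLe e f) :
    s ∈ Fef e f ↔ ∃ (p : S) (g : Sˣ),
      IsIdempotentElem p ∧ NatLe e p ∧ NatLe p f ∧ g ∈ natconn e ∧ s = p * g := by
  constructor
  · rintro ⟨t, ht, rfl⟩
    obtain ⟨p, g, hp, hep, hg, rfl⟩ := (hfact.mem_upfilter_iff he).1 ht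
    have hfp := isIdempotentElem_mul hf hp
    refine ⟨f * p, g, hfp, mul_mem_upfilter he hef hep, ?_, hg, (mul_assoc f p g).symm⟩
    rw [natLe_iff_mul_eq hfp, (commute_of_isIdempotentElem hf hp).eq, mul_assoc, hf.eq]
  · rintro ⟨p, g, hp, hep, hpf, hg, rfl⟩
    refine ⟨p * g, (hfact.mem_upfilter_iff he).2 ⟨p, g, hp, hep, hg, rfl⟩, ?_⟩
    change f * (p * g) = p * g
    rw [← mul_assoc, (commute_of_isIdempotentElem hf hp).eq, (natLe_iff_mul_eq hp).1 hpf]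

end Filters

/-- The join of two idempotents in the semilattice of idempotents, defined as an idempotent that
corresponds to the intersection of their subgroups under the natural connection; it has a junk
value if there is no such idempotent. -/
noncomputable def idemSup {S : Type*} [Monoid S] (e f : S) : S :=
  Function.invFunOn natconn {h : S | IsIdempotentElem h} (natconn e ⊓ natconn f)

theorem idemSup_comm {S : Type*} [Monoid S] (e f : S) : idemSup e f = idemSup f e := by
  rw [idemSup, inf_comm, idemSup]

namespace NatconnDualIso

open InverseMonoid

section Monoid

variable {S : Type*} [Monoid S] (hθ : NatconnDualIso S) {e f : S}

include hθ

theorem natLe_iff (he : IsIdempotentElem e) (hf : IsIdempotentElem f) :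
    NatLe e f ↔ natconn f ≤ natconn e :=
  hθ.2.1 e f he hf

theorem eq_of_natconn_eq (he : IsIdempotentElem e) (hf : IsIdempotentElem f)
    (h : natconn e = natconn f) : e = f :=
  hθ.1 e f he hf h

theorem isIdempotentElem_idemSup (he : IsIdempotentElem e) (hf : IsIdempotentElem f) :
    IsIdempotentElem (idemSup e f) :=
  Function.invFunOn_mem (hθ.2.2 e f he hf).2

theorem natconn_idemSup (he : IsIdempotentElem e) (hf : IsIdempotentElem f) :
    natconn (idemSup e f) = natconn e ⊓ natconn f :=
  Function.invFunOn_eq (hθ.2.2 e f he hf).2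

theorem commute_iff_mem_normalizer (he : IsIdempotentElem e) (g : Sˣ) :
    Commute e (g : S) ↔ g ∈ Subgroup.normalizer (natconn e) := by
  rw [Subgroup.mem_normalizer_iff_map_conj_eq, ← natconn_conj, Commute.symm_iff]
  calc (g : S) * e = e * g ↔ (g : S) * e * (g⁻¹ : Sˣ) = e :=
      (Units.mul_inv_eq_iff_eq_mul g).symm
    _ ↔ natconn ((g : S) * e * (g⁻¹ : Sˣ)) = natconn e :=
      ⟨congrArg natconn, hθ.eq_of_natconn_eq (isIdempotentElem_conj he g) he⟩

end Monoid

section InverseMonoid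

variable {S : Type*} [InverseMonoid S] (hθ : NatconnDualIso S) (hfact : Factorizable S)
variable {e f s : S}

include hθ

theorem natconn_mul (he : IsIdempotentElem e) (hf : IsIdempotentElem f) :
    natconn (e * f) = natconn e ⊔ natconn f := by
  obtain ⟨h, hh, hsup⟩ := (hθ.2.2 e f he hf).1
  have hef := isIdempotentElem_mul he hf
  apply le_antisymm
  · have hhe : NatLe h e := (hθ.natLe_iff hh he).2 (hsup ▸ le_sup_left)
    have hhf : NatLe h f := (hθ.natLe_iff hh hf).2 (hsup ▸ le_sup_right)
    rw [← hsup, ← hθ.natLe_iff hh hef]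
    exact mul_mem_upfilter hh hhe hhf
  · refine sup_le ((hθ.natLe_iff hef he).1 ?_) ((hθ.natLe_iff hef hf).1 ?_)
    · rw [natLe_iff_mul_eq hef, (commute_of_isIdempotentElem he hf).eq, mul_assoc, he.eq]
    · rw [natLe_iff_mul_eq hef, mul_assoc, hf.eq]

include hfact

theorem commute_of_mem_upfilter (he : IsIdempotentElem e) (hf : IsIdempotentElem f)
    (hef : natconn e ≤ Subgroup.normalizer (natconn f)) (hs : s ∈ upfilter e) : Commute f s := by
  obtain ⟨p, g, hp, -, hg, rfl⟩ := (hfact.mem_upfilter_iff he).1 hs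
  exact (commute_of_isIdempotentElem hf hp).mul_right
    ((hθ.commute_iff_mem_normalizer hf g).2 (hef hg))

theorem centralIn_upfilter_iff (he : IsIdempotentElem e) (hf : IsIdempotentElem f) :
    CentralIn (upfilter e) f ↔ NormalIn (natconn f) (natconn e) := by
  constructor
  · rintro ⟨hle, hcomm⟩
    exact ⟨(hθ.natLe_iff he hf).1 hle, fun g hg => (hθ.commute_iff_mem_normalizer hf g).1
      (hcomm g ((natLe_iff_mul_eq he).2 hg))⟩
  · intro h
    exact ⟨(hθ.natLe_iff he hf).2 h.le,
      fun s hs => hθ.commute_of_mem_upfilter hfact he hf h.le_normalizer hs⟩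

theorem mem_Fef_iff (he : IsIdempotentElem e) (hf : IsIdempotentElem f)
    (hef : natconn f ≤ natconn e) :
    s ∈ Fef e f ↔ ∃ (p : S) (g : Sˣ), IsIdempotentElem p ∧ natconn p ≤ natconn e ∧
      natconn f ≤ natconn p ∧ g ∈ natconn e ∧ s = p * g := by
  rw [hfact.mem_Fef_iff he hf ((hθ.natLe_iff he hf).2 hef)]
  refine exists₂_congr fun p g => and_congr_right fun hp => ?_
  rw [hθ.natLe_iff he hp, hθ.natLe_iff hp hf]

omit hfact in
theorem natconn_mul_inf {p : S} (hf : IsIdempotentElem f) (hp : IsIdempotentElem p)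
    (hnorm : natconn e ≤ Subgroup.normalizer (natconn f)) (hpe : natconn p ≤ natconn e)
    (hp_ge : natconn e ⊓ natconn f ≤ natconn p) : natconn (p * f) ⊓ natconn e = natconn p := by
  rw [hθ.natconn_mul hp hf, sup_inf_assoc_of_left_le_normalizer hpe (hpe.trans hnorm), inf_comm,
    sup_eq_left.2 hp_ge]

section SecondIsomorphism

open scoped Pointwise

variable (he : IsIdempotentElem e) (hf : IsIdempotentElem f)

include he hf

theorem mem_Fef_idemSup_iff :
    s ∈ Fef e (idemSup e f) ↔ ∃ (p : S) (g : Sˣ), IsIdempotentElem p ∧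
      natconn p ≤ natconn e ∧ natconn e ⊓ natconn f ≤ natconn p ∧ g ∈ natconn e ∧ s = p * g := by
  have hsup := hθ.natconn_idemSup he hf
  rw [hθ.mem_Fef_iff hfact he (hθ.isIdempotentElem_idemSup he hf) (hsup ▸ inf_le_left), hsup]

theorem mem_Fef_mul_iff :
    s ∈ Fef (e * f) f ↔ ∃ (p : S) (g : Sˣ), IsIdempotentElem p ∧
      natconn p ≤ natconn e ⊔ natconn f ∧ natconn f ≤ natconn p ∧ g ∈ natconn e ⊔ natconn f ∧
      s = p * g := by
  have hmul := hθ.natconn_mul he hf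
  rw [hθ.mem_Fef_iff hfact (isIdempotentElem_mul he hf) hf (hmul ▸ le_sup_right), hmul]

theorem mapsTo_mul_left_Fef : Set.MapsTo (f * ·) (Fef e (idemSup e f)) (Fef (e * f) f) := by
  intro s hs
  obtain ⟨p, g, hp, hpe, -, hg, rfl⟩ := (hθ.mem_Fef_idemSup_iff hfact he hf).1 hs
  have hfp := hθ.natconn_mul hf hp
  refine (hθ.mem_Fef_mul_iff hfact he hf).2 ⟨f * p, g, isIdempotentElem_mul hf hp, ?_,
    hfp ▸ le_sup_left, Subgroup.mem_sup_left hg, (mul_assoc f p g).symm⟩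
  rw [hfp, sup_comm]
  exact sup_le_sup_right hpe _

variable (hnorm : natconn e ≤ Subgroup.normalizer (natconn f))

include hnorm

theorem injOn_mul_left_Fef : Set.InjOn (f * ·) (Fef e (idemSup e f)) := by
  intro s hs t ht hst
  obtain ⟨p, g, hp, hpe, hp_ge, hg, rfl⟩ := (hθ.mem_Fef_idemSup_iff hfact he hf).1 hs
  obtain ⟨q, k, hq, hqe, hq_ge, hk, rfl⟩ := (hθ.mem_Fef_idemSup_iff hfact he hf).1 ht
  simp only [← mul_assoc, (commute_of_isIdempotentElem hf hp).eq,
    (commute_of_isIdempotentElem hf hq).eq] at hst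
  have hpf : p * f = q * f :=
    eq_of_mul_unit_eq (isIdempotentElem_mul hp hf) (isIdempotentElem_mul hq hf) hst
  have hP := hθ.natconn_mul_inf hf hp hnorm hpe hp_ge
  have hQ := hθ.natconn_mul_inf hf hq hnorm hqe hq_ge
  obtain rfl : p = q := hθ.eq_of_natconn_eq hp hq (by rw [← hP, hpf, hQ])
  rw [mul_unit_eq_mul_unit_iff] at hst ⊢
  exact hP.le ⟨hst, (natconn e).mul_mem hg ((natconn e).inv_mem hk)⟩

theorem surjOn_mul_left_Fef : Set.SurjOn (f * ·) (Fef e (idemSup e f)) (Fef (e * f) f) := by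
  intro s hs
  obtain ⟨q, u, hq, hq_le, hfq, hu, rfl⟩ := (hθ.mem_Fef_mul_iff hfact he hf).1 hs
  rw [sup_comm] at hq_le hu
  have hp := hθ.isIdempotentElem_idemSup he hq
  have hsup := hθ.natconn_idemSup he hq
  have hfp : f * idemSup e q = q := hθ.eq_of_natconn_eq (isIdempotentElem_mul hf hp) hq <| by
    rw [hθ.natconn_mul hf hp, hsup, ← sup_inf_assoc_of_right_le_normalizer hfq hnorm,
      inf_eq_right.2 hq_le]
  obtain ⟨a, ha, b, hb, rfl⟩ : u ∈ (natconn f : Set Sˣ) * (natconn e : Set Sˣ) := by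
    rwa [← Subgroup.coe_mul_of_right_le_normalizer_left _ _ hnorm]
  refine ⟨idemSup e q * b, (hθ.mem_Fef_idemSup_iff hfact he hf).2
    ⟨idemSup e q, b, hp, hsup ▸ inf_le_left, ?_, hb, rfl⟩, ?_⟩
  · rw [hsup]
    exact inf_le_inf_left _ hfq
  · change f * (idemSup e q * b) = q * (a * b : Sˣ)
    rw [← mul_assoc, hfp, Units.val_mul, ← mul_assoc, mem_natconn.1 (hfq ha)]

/-- The analogue of the second isomorphism theorem `H / (H ∩ N) ≃ HN / N`. -/
theorem subIso_Fef_idemSup_Fef_mul : SubIso (Fef e (idemSup e f)) (Fef (e * f) f) := by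
  refine ⟨(f * ·), ⟨hθ.mapsTo_mul_left_Fef hfact he hf, hθ.injOn_mul_left_Fef hfact he hf hnorm,
    hθ.surjOn_mul_left_Fef hfact he hf hnorm⟩, fun s hs t _ => ?_⟩
  have hle : NatLe e (idemSup e f) := (hθ.natLe_iff he (hθ.isIdempotentElem_idemSup he hf)).2
    (hθ.natconn_idemSup he hf ▸ inf_le_left)
  exact mul_mul_eq_of_commute hf
    (hθ.commute_of_mem_upfilter hfact he hf hnorm (Fef_subset_upfilter he hle hs)) t

end SecondIsomorphism

end InverseMonoid

end NatconnDualIso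

/-- The idempotent `a' (a ∨ b)` of Zassenhaus' lemma. Under the natural connection it corresponds
to `A' (A ∩ B)`, where `A`, `A'` and `B` are the subgroups of `a`, `a'` and `b`. -/
noncomputable def zassenhausIdem {S : Type*} [Monoid S] (a a' b : S) : S :=
  a' * idemSup a b

namespace NatconnDualIso

open InverseMonoid

section Zassenhaus

variable {S : Type*} [InverseMonoid S] (hθ : NatconnDualIso S) {a a' b b' : S}

include hθ

theorem isIdempotentElem_zassenhausIdem (ha : IsIdempotentElem a) (ha' : IsIdempotentElem a')
    (hb : IsIdempotentElem b) : IsIdempotentElem (zassenhausIdem a a' b) :=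
  isIdempotentElem_mul ha' (hθ.isIdempotentElem_idemSup ha hb)

theorem natconn_zassenhausIdem (ha : IsIdempotentElem a) (ha' : IsIdempotentElem a')
    (hb : IsIdempotentElem b) :
    natconn (zassenhausIdem a a' b) = natconn a' ⊔ (natconn a ⊓ natconn b) := by
  rw [zassenhausIdem, hθ.natconn_mul ha' (hθ.isIdempotentElem_idemSup ha hb),
    hθ.natconn_idemSup ha hb]

variable (hfact : Factorizable S) (ha : IsIdempotentElem a) (ha' : IsIdempotentElem a')
  (hb : IsIdempotentElem b) (hb' : IsIdempotentElem b')

include ha ha' hb hb'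

theorem isIdempotentElem_idemSup_mul_idemSup :
    IsIdempotentElem (idemSup a' b * idemSup a b') :=
  isIdempotentElem_mul (hθ.isIdempotentElem_idemSup ha' hb) (hθ.isIdempotentElem_idemSup ha hb')

theorem natconn_idemSup_mul_idemSup :
    natconn (idemSup a' b * idemSup a b') =
      (natconn a' ⊓ natconn b) ⊔ (natconn a ⊓ natconn b') := by
  rw [hθ.natconn_mul (hθ.isIdempotentElem_idemSup ha' hb) (hθ.isIdempotentElem_idemSup ha hb'),
    hθ.natconn_idemSup ha' hb, hθ.natconn_idemSup ha hb']

variable (hA : NormalIn (natconn a') (natconn a)) (hB : NormalIn (natconn b') (natconn b))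

include hA hB

theorem normalIn_natconn_zassenhausIdem :
    NormalIn (natconn (zassenhausIdem a a' b')) (natconn (zassenhausIdem a a' b)) := by
  rw [hθ.natconn_zassenhausIdem ha ha' hb, hθ.natconn_zassenhausIdem ha ha' hb']
  exact hA.sup_inf_right hB

omit hA in
theorem mul_zassenhausIdem_eq : idemSup a b * zassenhausIdem a a' b' = zassenhausIdem a a' b := by
  have hab := hθ.isIdempotentElem_idemSup ha hb
  have hz := hθ.isIdempotentElem_zassenhausIdem ha ha' hb'
  apply hθ.eq_of_natconn_eq (isIdempotentElem_mul hab hz)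
    (hθ.isIdempotentElem_zassenhausIdem ha ha' hb)
  rw [hθ.natconn_mul hab hz, hθ.natconn_idemSup ha hb, hθ.natconn_zassenhausIdem ha ha' hb,
    hθ.natconn_zassenhausIdem ha ha' hb', sup_left_comm,
    sup_eq_left.2 (inf_le_inf_left (natconn a) hB.le)]

theorem idemSup_zassenhausIdem_eq :
    idemSup (idemSup a b) (zassenhausIdem a a' b') = idemSup a' b * idemSup a b' := by
  have hab := hθ.isIdempotentElem_idemSup ha hb
  have hz := hθ.isIdempotentElem_zassenhausIdem ha ha' hb'
  apply hθ.eq_of_natconn_eq (hθ.isIdempotentElem_idemSup hab hz)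
    (hθ.isIdempotentElem_idemSup_mul_idemSup ha ha' hb hb')
  rw [hθ.natconn_idemSup hab hz, hθ.natconn_idemSup ha hb, hθ.natconn_zassenhausIdem ha ha' hb',
    hθ.natconn_idemSup_mul_idemSup ha ha' hb hb', inf_comm, hA.sup_inf_inf_inf hB]

include hfact

theorem subIso_Fef_idemSup_Fef_zassenhausIdem :
    SubIso (Fef (idemSup a b) (idemSup a' b * idemSup a b'))
      (Fef (zassenhausIdem a a' b) (zassenhausIdem a a' b')) := by
  have hab := hθ.isIdempotentElem_idemSup ha hb
  have hz := hθ.isIdempotentElem_zassenhausIdem ha ha' hb'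
  have hnorm : natconn (idemSup a b) ≤
      Subgroup.normalizer (natconn (zassenhausIdem a a' b')) := by
    refine le_trans ?_ (hθ.normalIn_natconn_zassenhausIdem ha ha' hb hb' hA hB).le_normalizer
    rw [hθ.natconn_idemSup ha hb, hθ.natconn_zassenhausIdem ha ha' hb]
    exact le_sup_right
  rw [← hθ.idemSup_zassenhausIdem_eq ha ha' hb hb' hA hB,
    ← hθ.mul_zassenhausIdem_eq ha ha' hb hb' hB]
  exact hθ.subIso_Fef_idemSup_Fef_mul hfact hab hz hnorm

theorem Fef_idemSup_mul_mem :
    ∀ x ∈ Fef (idemSup a b) (idemSup a' b * idemSup a b'),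
      ∀ y ∈ Fef (idemSup a b) (idemSup a' b * idemSup a b'),
        x * y ∈ Fef (idemSup a b) (idemSup a' b * idemSup a b') := by
  have hab := hθ.isIdempotentElem_idemSup ha hb
  have hj := hθ.isIdempotentElem_idemSup_mul_idemSup ha ha' hb hb'
  apply Fef_mul_mem hab hj
  rw [hθ.centralIn_upfilter_iff hfact hab hj, hθ.natconn_idemSup ha hb,
    hθ.natconn_idemSup_mul_idemSup ha ha' hb hb']
  exact (hA.inf (.refl _)).sup ((NormalIn.refl _).inf hB)

/-- The analogue of Zassenhaus' butterfly lemma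
`A' (A ∩ B) / A' (A ∩ B') ≃ B' (B ∩ A) / B' (B ∩ A')`. -/
theorem subIso_Fef_zassenhausIdem :
    SubIso (Fef (zassenhausIdem a a' b) (zassenhausIdem a a' b'))
      (Fef (zassenhausIdem b b' a) (zassenhausIdem b b' a')) := by
  have hswap : idemSup b' a * idemSup b a' = idemSup a' b * idemSup a b' := by
    rw [idemSup_comm b', idemSup_comm b, (commute_of_isIdempotentElem
      (hθ.isIdempotentElem_idemSup ha hb') (hθ.isIdempotentElem_idemSup ha' hb)).eq]
  have hleft := hθ.subIso_Fef_idemSup_Fef_zassenhausIdem hfact ha ha' hb hb' hA hB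
  have hright := hθ.subIso_Fef_idemSup_Fef_zassenhausIdem hfact hb hb' ha ha' hB hA
  rw [hswap, idemSup_comm b] at hright
  exact (hleft.symm (hθ.Fef_idemSup_mul_mem hfact ha ha' hb hb' hA hB)).trans hright

end Zassenhaus

end NatconnDualIso

section DoubleIndex

theorem apply_succ_div_mod {α : Type*} (u : ℕ → ℕ → α) {p : ℕ} (hp : 0 < p)
    (hu : ∀ i, u i p = u (i + 1) 0) (k : ℕ) :
    u ((k + 1) / p) ((k + 1) % p) = u (k / p) (k % p + 1) := by
  rcases (Nat.succ_le_of_lt (Nat.mod_lt k hp)).lt_or_eq with hlt | heq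
  · have hmod : (k + 1) % p = k % p + 1 := by rw [← Nat.mod_add_mod, Nat.mod_eq_of_lt hlt]
    rw [Nat.succ_div_of_mod_ne_zero (hmod.trans_ne (Nat.succ_ne_zero _)), hmod]
  · have heq : k % p + 1 = p := heq
    have hmod : (k + 1) % p = 0 := by rw [← Nat.mod_add_mod, heq, Nat.mod_self]
    rw [Nat.succ_div_of_mod_eq_zero hmod, hmod, ← hu, heq]

/-- The permutation of positions that transposes a matrix stored row by row: position `k` of an
`n × p` matrix becomes position `transposeIndex n p k` of its `p × n` transpose. -/
def transposeIndex (n p k : ℕ) : ℕ :=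
  k % p * n + k / p

variable {n p k : ℕ}

theorem transposeIndex_mod (hk : k < n * p) : transposeIndex n p k % n = k / p :=
  Nat.mul_add_mod_of_lt (Nat.div_lt_of_lt_mul (mul_comm n p ▸ hk))

theorem transposeIndex_div (hk : k < n * p) : transposeIndex n p k / n = k % p := by
  have hlt : k / p < n := Nat.div_lt_of_lt_mul (mul_comm n p ▸ hk)
  rw [transposeIndex, mul_comm, Nat.mul_add_div (Nat.zero_lt_of_lt hlt), Nat.div_eq_of_lt hlt,
    add_zero]

theorem transposeIndex_lt (hk : k < n * p) : transposeIndex n p k < p * n := by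
  have hn : 0 < n := Nat.pos_of_mul_pos_right (Nat.zero_lt_of_lt hk)
  have hp : 0 < p := Nat.pos_of_mul_pos_left (Nat.zero_lt_of_lt hk)
  rw [← Nat.div_lt_iff_lt_mul hn, transposeIndex_div hk]
  exact Nat.mod_lt k hp

theorem transposeIndex_transposeIndex (hk : k < n * p) :
    transposeIndex p n (transposeIndex n p k) = k := by
  rw [transposeIndex, transposeIndex_mod hk, transposeIndex_div hk, Nat.div_add_mod']

theorem bijOn_transposeIndex (n p : ℕ) :
    Set.BijOn (transposeIndex n p) {k | k < n * p} {k | k < p * n} :=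
  Set.InvOn.bijOn
    ⟨fun _ hk => transposeIndex_transposeIndex hk, fun _ hk => transposeIndex_transposeIndex hk⟩
    (fun _ hk => transposeIndex_lt hk) (fun _ hk => transposeIndex_lt hk)

end DoubleIndex

section Series

variable {S : Type*} [InverseMonoidWithZero S] {n : ℕ} {c c' : ℕ → S}

theorem isIdempotentElem_zero : IsIdempotentElem (0 : S) :=
  InverseMonoidWithZero.zero_mul 0

theorem natconn_zero : natconn (0 : S) = ⊤ := by
  ext g
  simp [mem_natconn, InverseMonoidWithZero.zero_mul]

theorem upfilter_zero : upfilter (0 : S) = Set.univ :=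
  Set.eq_univ_of_forall fun s =>
    (mem_upfilter_iff isIdempotentElem_zero).2 (InverseMonoidWithZero.zero_mul s)

theorem centralIn_univ_zero : CentralIn Set.univ (0 : S) :=
  ⟨Set.mem_univ _, fun s _ => by
    rw [InverseMonoidWithZero.zero_mul, InverseMonoidWithZero.mul_zero]⟩

theorem NatconnDualIso.centralIn_univ_iff (hθ : NatconnDualIso S) (hfact : Factorizable S) {e : S}
    (he : IsIdempotentElem e) : CentralIn Set.univ e ↔ (natconn e).Normal := by
  rw [← upfilter_zero, hθ.centralIn_upfilter_iff hfact isIdempotentElem_zero he, natconn_zero,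
    ← Subgroup.normalizer_eq_top_iff]
  exact ⟨fun h => top_le_iff.1 h.le_normalizer, fun h => ⟨le_top, h.ge⟩⟩

theorem NatconnDualIso.centralIn_univ_zassenhausIdem (hθ : NatconnDualIso S)
    (hfact : Factorizable S) {a a' b : S} (ha : IsIdempotentElem a) (ha' : IsIdempotentElem a')
    (hb : IsIdempotentElem b) (hca : CentralIn Set.univ a) (hca' : CentralIn Set.univ a')
    (hcb : CentralIn Set.univ b) : CentralIn Set.univ (zassenhausIdem a a' b) := by
  rw [hθ.centralIn_univ_iff hfact (hθ.isIdempotentElem_zassenhausIdem ha ha' hb),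
    hθ.natconn_zassenhausIdem ha ha' hb]
  have := (hθ.centralIn_univ_iff hfact ha).1 hca
  have := (hθ.centralIn_univ_iff hfact ha').1 hca'
  have := (hθ.centralIn_univ_iff hfact hb).1 hcb
  infer_instance

theorem isCentralSeries_iff : IsCentralSeries n c ↔
    IsSubcentralSeries n c ∧ ∀ i ≤ n, CentralIn Set.univ (c i) := by
  constructor
  · rintro ⟨hzero, hone, hidem, hle, hcentral⟩
    refine ⟨⟨hzero, hone, hidem, fun i hi =>
      ⟨hle i hi, fun s _ => (hcentral i hi).2 s (Set.mem_univ s)⟩⟩, fun i hi => ?_⟩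
    cases i with
    | zero => exact hzero ▸ centralIn_univ_zero
    | succ i => exact hcentral i hi
  · rintro ⟨⟨hzero, hone, hidem, hsub⟩, hcentral⟩
    exact ⟨hzero, hone, hidem, fun i hi => (hsub i hi).1, fun i hi => hcentral (i + 1) hi⟩

/-- A subcentral idempotent series of length at most `n`, continued by the constant value `1`, so
that the conditions on its terms hold for all indices. -/
structure IsSubcentralChain (n : ℕ) (c : ℕ → S) : Prop where
  zero : c 0 = 0
  eq_one : ∀ i, n ≤ i → c i = 1
  idem : ∀ i, IsIdempotentElem (c i)
  central : ∀ i, CentralIn (upfilter (c i)) (c (i + 1))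

-- Bounding the length by `n + 1` keeps it positive, so that one can divide by it.
theorem IsSubcentralSeries.isSubcentralChain (hc : IsSubcentralSeries n c) :
    IsSubcentralChain (n + 1) fun i => c (min i n) where
  zero := by rw [Nat.zero_min, hc.1]
  eq_one i hi := by rw [min_eq_right (n.le_succ.trans hi), hc.2.1]
  idem i := hc.2.2.1 _ (min_le_right i n)
  central i := by
    rcases lt_or_ge i n with hi | hi
    · rw [min_eq_left hi.le, min_eq_left (Nat.succ_le_of_lt hi)]
      exact hc.2.2.2 i hi
    · rw [min_eq_right hi, min_eq_right (hi.trans i.le_succ), hc.2.1]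
      exact ⟨⟨1, .one, (one_mul 1).symm⟩, fun s _ => by rw [one_mul, mul_one]⟩

/-- The Schreier refinement of `c` by `c'`: the factor between `c i` and `c (i + 1)` is subdivided
into `p` factors by the idempotents `zassenhausIdem (c i) (c (i + 1)) (c' j)`, where `j < p`. -/
noncomputable def schreierRefinement (p : ℕ) (c c' : ℕ → S) (k : ℕ) : S :=
  zassenhausIdem (c (k / p)) (c (k / p + 1)) (c' (k % p))

namespace IsSubcentralChain

variable (hθ : NatconnDualIso S) (hfact : Factorizable S) {p : ℕ}
variable (hc : IsSubcentralChain n c) (hc' : IsSubcentralChain p c')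

include hθ hfact hc

theorem normalIn_natconn (i : ℕ) : NormalIn (natconn (c (i + 1))) (natconn (c i)) :=
  (hθ.centralIn_upfilter_iff hfact (hc.idem i) (hc.idem (i + 1))).1 (hc.central i)

theorem zassenhausIdem_zero (i : ℕ) : zassenhausIdem (c i) (c (i + 1)) 0 = c i := by
  apply hθ.eq_of_natconn_eq (hθ.isIdempotentElem_zassenhausIdem (hc.idem i) (hc.idem (i + 1))
    isIdempotentElem_zero) (hc.idem i)
  rw [hθ.natconn_zassenhausIdem (hc.idem i) (hc.idem (i + 1)) isIdempotentElem_zero,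
    natconn_zero, inf_top_eq, sup_eq_right.2 (hc.normalIn_natconn hθ hfact i).le]

omit hfact in
theorem zassenhausIdem_one (i : ℕ) : zassenhausIdem (c i) (c (i + 1)) 1 = c (i + 1) := by
  apply hθ.eq_of_natconn_eq (hθ.isIdempotentElem_zassenhausIdem (hc.idem i) (hc.idem (i + 1))
    .one) (hc.idem (i + 1))
  rw [hθ.natconn_zassenhausIdem (hc.idem i) (hc.idem (i + 1)) .one, natconn_one, inf_bot_eq,
    sup_bot_eq]

include hc'

omit hfact in
theorem isIdempotentElem_schreierRefinement (k : ℕ) :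
    IsIdempotentElem (schreierRefinement p c c' k) :=
  hθ.isIdempotentElem_zassenhausIdem (hc.idem _) (hc.idem _) (hc'.idem _)

variable (hp : 0 < p)

include hp

theorem schreierRefinement_succ (k : ℕ) : schreierRefinement p c c' (k + 1) =
    zassenhausIdem (c (k / p)) (c (k / p + 1)) (c' (k % p + 1)) := by
  refine apply_succ_div_mod (fun i j => zassenhausIdem (c i) (c (i + 1)) (c' j)) hp
    (fun i => ?_) k
  rw [hc'.eq_one p le_rfl, hc'.zero, hc.zassenhausIdem_one hθ, hc.zassenhausIdem_zero hθ hfact]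

theorem schreierRefinement_mul (i : ℕ) : schreierRefinement p c c' (i * p) = c i := by
  rw [schreierRefinement, Nat.mul_div_cancel _ hp, Nat.mul_mod_left, hc'.zero,
    hc.zassenhausIdem_zero hθ hfact]

theorem isSubcentralSeries_schreierRefinement :
    IsSubcentralSeries (n * p) (schreierRefinement p c c') := by
  have hidem := hc.isIdempotentElem_schreierRefinement hθ hc'
  refine ⟨?_, ?_, fun k _ => hidem k, fun k _ => ?_⟩
  · simpa only [zero_mul, hc.zero] using hc.schreierRefinement_mul hθ hfact hc' hp 0
  · rw [hc.schreierRefinement_mul hθ hfact hc' hp, hc.eq_one n le_rfl]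
  · rw [hθ.centralIn_upfilter_iff hfact (hidem k) (hidem (k + 1)),
      hc.schreierRefinement_succ hθ hfact hc' hp]
    exact hθ.normalIn_natconn_zassenhausIdem (hc.idem _) (hc.idem _) (hc'.idem _) (hc'.idem _)
      (hc.normalIn_natconn hθ hfact _) (hc'.normalIn_natconn hθ hfact _)

theorem isCentralSeries_schreierRefinement (hcentral : ∀ i, CentralIn Set.univ (c i))
    (hcentral' : ∀ i, CentralIn Set.univ (c' i)) :
    IsCentralSeries (n * p) (schreierRefinement p c c') :=
  isCentralSeries_iff.2 ⟨hc.isSubcentralSeries_schreierRefinement hθ hfact hc' hp, fun _ _ =>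
    hθ.centralIn_univ_zassenhausIdem hfact (hc.idem _) (hc.idem _) (hc'.idem _) (hcentral _)
      (hcentral _) (hcentral' _)⟩

theorem seriesIso_schreierRefinement (hn : 0 < n) :
    SeriesIso (n * p) (schreierRefinement p c c') (p * n) (schreierRefinement n c' c) := by
  refine ⟨mul_comm n p, transposeIndex n p, bijOn_transposeIndex n p, fun k hk => ?_⟩
  rw [hc.schreierRefinement_succ hθ hfact hc' hp, hc'.schreierRefinement_succ hθ hfact hc hn]
  simp only [schreierRefinement, transposeIndex_mod hk, transposeIndex_div hk]
  exact hθ.subIso_Fef_zassenhausIdem hfact (hc.idem _) (hc.idem _) (hc'.idem _) (hc'.idem _)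
    (hc.normalIn_natconn hθ hfact _) (hc'.normalIn_natconn hθ hfact _)

end IsSubcentralChain

theorem IsSubcentralSeries.exists_schreierRefinement_eq (hθ : NatconnDualIso S)
    (hfact : Factorizable S) (hc : IsSubcentralSeries n c) {p : ℕ} (hc' : IsSubcentralChain p c')
    (hp : 0 < p) :
    ∀ i ≤ n, ∃ k ≤ (n + 1) * p, schreierRefinement p (fun i => c (min i n)) c' k = c i := by
  intro i hi
  refine ⟨i * p, Nat.mul_le_mul_right p (hi.trans n.le_succ), ?_⟩
  rw [hc.isSubcentralChain.schreierRefinement_mul hθ hfact hc' hp, min_eq_left hi]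

end Series

/-- In a factorizable inverse monoid with zero whose natural connection is
a dual isomorphism onto a sublattice of the lattice of subgroups of the group of units,
any two subcentral (resp. central) idempotent series possess isomorphic subcentral
(resp. central) refinements. -/
theorem stmt_8 {S : Type*} [InverseMonoidWithZero S] (hfact : Factorizable S)
    (hθ : NatconnDualIso S) :
    (∀ (n : ℕ) (c : ℕ → S) (n' : ℕ) (c' : ℕ → S),
      IsSubcentralSeries n c → IsSubcentralSeries n' c' →
      ∃ (m : ℕ) (d : ℕ → S) (m' : ℕ) (d' : ℕ → S),
        IsSubcentralSeries m d ∧ IsSubcentralSeries m' d' ∧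
        (∀ i ≤ n, ∃ j ≤ m, d j = c i) ∧ (∀ i ≤ n', ∃ j ≤ m', d' j = c' i) ∧
        SeriesIso m d m' d') ∧
    (∀ (n : ℕ) (c : ℕ → S) (n' : ℕ) (c' : ℕ → S),
      IsCentralSeries n c → IsCentralSeries n' c' →
      ∃ (m : ℕ) (d : ℕ → S) (m' : ℕ) (d' : ℕ → S),
        IsCentralSeries m d ∧ IsCentralSeries m' d' ∧
        (∀ i ≤ n, ∃ j ≤ m, d j = c i) ∧ (∀ i ≤ n', ∃ j ≤ m', d' j = c' i) ∧
        SeriesIso m d m' d') := by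
  refine ⟨fun n c n' c' hc hc' => ?_, fun n c n' c' hc hc' => ?_⟩
  · have hchain := hc.isSubcentralChain
    have hchain' := hc'.isSubcentralChain
    exact ⟨_, _, _, _,
      hchain.isSubcentralSeries_schreierRefinement hθ hfact hchain' n'.succ_pos,
      hchain'.isSubcentralSeries_schreierRefinement hθ hfact hchain n.succ_pos,
      hc.exists_schreierRefinement_eq hθ hfact hchain' n'.succ_pos,
      hc'.exists_schreierRefinement_eq hθ hfact hchain n.succ_pos,
      hchain.seriesIso_schreierRefinement hθ hfact hchain' n'.succ_pos n.succ_pos⟩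
  · obtain ⟨hc, hcentral⟩ := isCentralSeries_iff.1 hc
    obtain ⟨hc', hcentral'⟩ := isCentralSeries_iff.1 hc'
    have hchain := hc.isSubcentralChain
    have hchain' := hc'.isSubcentralChain
    have hcen i := hcentral _ (min_le_right i n)
    have hcen' i := hcentral' _ (min_le_right i n')
    exact ⟨_, _, _, _,
      hchain.isCentralSeries_schreierRefinement hθ hfact hchain' n'.succ_pos hcen hcen',
      hchain'.isCentralSeries_schreierRefinement hθ hfact hchain n.succ_pos hcen' hcen,
      hc.exists_schreierRefinement_eq hθ hfact hchain' n'.succ_pos,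
      hc'.exists_schreierRefinement_eq hθ hfact hchain n.succ_pos,
      hchain.seriesIso_schreierRefinement hθ hfact hchain' n'.succ_pos n.succ_pos⟩
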